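/- Let X be an integrable real random variable and U an integrable real random variable on a probability space (Ω, 𝓕, ℙ), and let c ∈ ℝ. If E[(X − c·U)·Complex.exp(i·ω·U)] = 0 for every ω ∈ ℝ, then E[X | σ(U)] = c·U almost surely. -/

import Mathlib

/-!
Write `Y = X - c U` and let `μ⁺`, `μ⁻` be the images under `U` of the finite measures `Y⁺ ℙ` and
`Y⁻ ℙ`. The hypothesis says that `μ⁺` and `μ⁻` have the same characteristic function, so they are
equal (`Measure.ext_of_charFun`). Evaluating both at a Borel set `t` gives `∫ Y = 0` over
`U ⁻¹' t`, that is, over every set of `σ(U)`, which characterizes `c U` as `E[X | σ(U)]`.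
-/

open MeasureTheory ProbabilityTheory

lemma charFun_map_withDensity {Ω : Type*} [MeasurableSpace Ω] {μ : Measure Ω}
    {U Y : Ω → ℝ} (hU : Measurable U) (hY : Measurable Y) (t : ℝ) :
    charFun ((μ.withDensity fun a => ENNReal.ofReal (Y a)).map U) t =
      ∫ a, ((max (Y a) 0 : ℝ) : ℂ) * Complex.exp (Complex.I * t * U a) ∂μ := by
  rw [charFun_apply_real, integral_map hU.aemeasurable (by fun_prop),
    integral_withDensity_eq_integral_toReal_smul (by fun_prop) (by simp)]
  refine integral_congr_ae (.of_forall fun a => ?_)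
  simp only [ENNReal.toReal_ofReal', Complex.real_smul]
  congr 2
  ring

lemma integrable_mul_cexp {Ω : Type*} [MeasurableSpace Ω] {μ : Measure Ω}
    {U Y : Ω → ℝ} (hU : Measurable U) (hY : Integrable Y μ) (t : ℝ) :
    Integrable (fun a => (Y a : ℂ) * Complex.exp (Complex.I * t * U a)) μ := by
  refine hY.ofReal.mul_bdd (c := 1) (by fun_prop) (.of_forall fun a => ?_)
  rw [show Complex.I * t * U a = ((t * U a : ℝ) : ℂ) * Complex.I by push_cast; ring,
    Complex.norm_exp_ofReal_mul_I]

/-- An integrable `Y` orthogonal to all complex exponentials of `U` has zero integral over every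
event determined by `U`. -/
lemma setIntegral_preimage_eq_zero {Ω : Type*} [MeasurableSpace Ω] {μ : Measure Ω}
    {U Y : Ω → ℝ} (hU : Measurable U) (hYm : Measurable Y) (hY : Integrable Y μ)
    (h : ∀ t : ℝ, ∫ a, (Y a : ℂ) * Complex.exp (Complex.I * t * U a) ∂μ = 0)
    {s : Set ℝ} (hs : MeasurableSet s) : ∫ a in U ⁻¹' s, Y a ∂μ = 0 := by
  have := isFiniteMeasure_withDensity_ofReal hY.2
  have := isFiniteMeasure_withDensity_ofReal hY.neg.2
  have key : (μ.withDensity fun a => ENNReal.ofReal (Y a)).map U =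
      (μ.withDensity fun a => ENNReal.ofReal ((-Y) a)).map U := by
    refine Measure.ext_of_charFun (funext fun t => ?_)
    rw [charFun_map_withDensity hU hYm, charFun_map_withDensity hU hYm.neg, ← sub_eq_zero,
      ← integral_sub (integrable_mul_cexp hU hY.pos_part t)
        (integrable_mul_cexp hU hY.neg.pos_part t), ← h t]
    refine integral_congr_ae (.of_forall fun a => ?_)
    have hpm : max (Y a) 0 - max (-Y a) 0 = Y a := by
      rcases le_total (Y a) 0 with h0 | h0 <;> simp [h0]
    simp only [Pi.neg_apply]
    rw [← sub_mul, ← Complex.ofReal_sub, hpm]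
  have hks := congrArg (fun ν => ν s) key
  simp only [Measure.map_apply hU hs, withDensity_apply _ (hU hs), Pi.neg_apply] at hks
  rw [integral_eq_lintegral_pos_part_sub_lintegral_neg_part hY.integrableOn, hks, sub_self]

theorem stmt17
    {Ω : Type*} [MeasureSpace Ω] [IsProbabilityMeasure (ℙ : Measure Ω)]
    (X U : Ω → ℝ) (hXmeas : Measurable X) (hUmeas : Measurable U)
    (hX1 : Integrable X ℙ) (hU1 : Integrable U ℙ)
    (c : ℝ)
    (hfour : ∀ ω : ℝ,
      ∫ ω', ((X ω' - c * U ω' : ℝ) : ℂ) * Complex.exp (Complex.I * ω * U ω') = 0) :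
    ℙ[X | MeasurableSpace.comap U inferInstance] =ᵐ[ℙ] fun ω => c * U ω := by
  have hcU : Integrable (fun ω => c * U ω) ℙ := hU1.const_mul c
  refine (ae_eq_condExp_of_forall_setIntegral_eq hUmeas.comap_le hX1
    (fun s _ _ => hcU.integrableOn) ?_ ?_).symm
  · rintro _ ⟨t, ht, rfl⟩ -
    have h0 := setIntegral_preimage_eq_zero hUmeas (hXmeas.sub (hUmeas.const_mul c))
      (hX1.sub hcU) hfour ht
    simp only [Pi.sub_apply] at h0
    rw [integral_sub hX1.integrableOn hcU.integrableOn] at h0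
    linarith
  · exact ((comap_measurable U).const_mul c).stronglyMeasurable.aestronglyMeasurable
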